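/- Let S = { x ∈ ℝⁿ : g₁(x) ≥ 0, …, gₘ(x) ≥ 0 } be a compact convex set defined by real polynomials gᵢ with nonempty interior, and set Zᵢ = {x ∈ ℝⁿ : gᵢ(x) = 0}. Assume: (1) gᵢ(x) > 0 whenever x is in the interior of S; (2) ∇gᵢ(u) ≠ 0 whenever u ∈ Zᵢ ∩ S; (3) whenever gᵢ is not sos-concave, Zᵢ ∩ ∂S has strictly convex shape with respect to S. If for every u ∈ ∂S and every i with gᵢ(u) = 0, either gᵢ is sos-concave or −vᵀ∇²gᵢ(u)v > 0 for every nonzero v with ∇gᵢ(u)ᵀv = 0 (i.e., Zᵢ has positive curvature at u), then S is SDP representable. -/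

import Mathlib

open MvPolynomial Metric Set Pointwise Filter

noncomputable section

/-- `ℝⁿ` with the Euclidean norm. -/
abbrev Rn (n : ℕ) : Type := EuclideanSpace ℝ (Fin n)

/-- A set `S ⊆ ℝⁿ` is SDP representable if it is the projection of a spectrahedron:
there are symmetric matrices `A₀, A i, B j` with
`S = { x | ∃ u, A₀ + Σ xᵢ Aᵢ + Σ uⱼ Bⱼ ⪰ 0 }`. -/
def IsSDPRepresentable {n : ℕ} (S : Set (Rn n)) : Prop :=
  ∃ (N d : ℕ) (A₀ : Matrix (Fin d) (Fin d) ℝ)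
    (A : Fin n → Matrix (Fin d) (Fin d) ℝ) (B : Fin N → Matrix (Fin d) (Fin d) ℝ),
    A₀.IsSymm ∧ (∀ i, (A i).IsSymm) ∧ (∀ j, (B j).IsSymm) ∧
    S = {x : Rn n | ∃ u : Fin N → ℝ,
      (A₀ + ∑ i, x i • A i + ∑ j, u j • B j).PosSemidef}

/-- Evaluation of a polynomial at a point of `ℝⁿ`. -/
def peval {n : ℕ} (g : MvPolynomial (Fin n) ℝ) (x : Rn n) : ℝ :=
  MvPolynomial.eval (fun i => x i) g

/-- The gradient `∇g(u)` of a polynomial. -/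
def pgrad {n : ℕ} (g : MvPolynomial (Fin n) ℝ) (u : Rn n) : Fin n → ℝ :=
  fun i => MvPolynomial.eval (fun j => u j) (MvPolynomial.pderiv i g)

/-- The Hessian `∇²g(u)` of a polynomial. -/
def phess {n : ℕ} (g : MvPolynomial (Fin n) ℝ) (u : Rn n) : Matrix (Fin n) (Fin n) ℝ :=
  Matrix.of fun i j =>
    MvPolynomial.eval (fun k => u k) (MvPolynomial.pderiv i (MvPolynomial.pderiv j g))

/-- A polynomial `g` is sos-concave if `-∇²g(x) = W(x)ᵀ W(x)` for some
(possibly nonsquare) matrix polynomial `W`. -/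
def SosConcave {n : ℕ} (g : MvPolynomial (Fin n) ℝ) : Prop :=
  ∃ (k : ℕ) (W : Fin k → Fin n → MvPolynomial (Fin n) ℝ),
    ∀ i j, - MvPolynomial.pderiv i (MvPolynomial.pderiv j g) = ∑ l, W l i * W l j

/-- `g` is quasi-concave at `u` : `-vᵀ∇²g(u)v ≥ 0` for every `v` with `∇g(u)ᵀv = 0`. -/
def QuasiConcaveAt {n : ℕ} (g : MvPolynomial (Fin n) ℝ) (u : Rn n) : Prop :=
  ∀ v : Fin n → ℝ, (∑ i, pgrad g u i * v i) = 0 →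
    0 ≤ -(∑ i, ∑ j, v i * phess g u i j * v j)

/-- `g` is strictly quasi-concave at `u` : if `∇g(u) ≠ 0` then `-vᵀ∇²g(u)v > 0`
for all nonzero `v ⊥ ∇g(u)`; if `∇g(u) = 0` then `-∇²g(u)` is positive definite. -/
def StrictlyQuasiConcaveAt {n : ℕ} (g : MvPolynomial (Fin n) ℝ) (u : Rn n) : Prop :=
  (pgrad g u ≠ 0 ∧ ∀ v : Fin n → ℝ, v ≠ 0 → (∑ i, pgrad g u i * v i) = 0 →
      0 < -(∑ i, ∑ j, v i * phess g u i j * v j)) ∨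
  (pgrad g u = 0 ∧ (-(phess g u)).PosDef)

/-- The convex boundary `∂_c T` : points of `T` minimizing some unit linear functional. -/
def convexBoundary {n : ℕ} (T : Set (Rn n)) : Set (Rn n) :=
  {u ∈ T | ∃ l : Rn n, ‖l‖ = 1 ∧ ∀ x ∈ T, (∑ i, l i * u i) ≤ ∑ i, l i * x i}

/-- `v` is a nonsingular point of `∂T` (w.r.t. defining polynomials `g`):
exactly one defining polynomial vanishes at `v`, with nonvanishing gradient. -/
def IsNonsingularBoundaryPoint {n m : ℕ} (g : Fin m → MvPolynomial (Fin n) ℝ)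
    (T : Set (Rn n)) (v : Rn n) : Prop :=
  v ∈ frontier T ∧ ∃ i, peval (g i) v = 0 ∧ pgrad (g i) v ≠ 0 ∧
    ∀ j, peval (g j) v = 0 → j = i

/-- A polynomial is SOS if it is a finite sum of squares of polynomials. -/
def IsSOSPoly {n : ℕ} (p : MvPolynomial (Fin n) ℝ) : Prop :=
  ∃ (k : ℕ) (q : Fin k → MvPolynomial (Fin n) ℝ), p = ∑ i, (q i) ^ 2

/-- The polynomial `δ² - ‖x - u‖²`. -/
def ballPoly {n : ℕ} (u : Rn n) (δ : ℝ) : MvPolynomial (Fin n) ℝ :=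
  MvPolynomial.C (δ ^ 2) - ∑ i, (MvPolynomial.X i - MvPolynomial.C (u i)) ^ 2

/-- The family `h₁, …, h_{m₂}` extended by the ball polynomial `h_m(x) = δ² - ‖x-u‖²`. -/
def extFamily {n m2 : ℕ} (h : Fin m2 → MvPolynomial (Fin n) ℝ) (u : Rn n) (δ : ℝ) :
    Fin (m2 + 1) → MvPolynomial (Fin n) ℝ :=
  Fin.snoc h (ballPoly u δ)

/-- The positive definite Lagrange Hessian (PDLH) condition at `u` with radius `δu`,
for the set `T = {x | f(x) = 0, h(x) ≥ 0}`. -/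
def PDLHAt {n m1 m2 : ℕ} (f : Fin m1 → MvPolynomial (Fin n) ℝ)
    (h : Fin m2 → MvPolynomial (Fin n) ℝ) (T : Set (Rn n)) (u : Rn n) (δu : ℝ) : Prop :=
  ∀ l : Rn n, ‖l‖ = 1 → ∀ δ : ℝ, 0 < δ → δ ≤ δu →
    ∀ v ∈ T ∩ closedBall u δ,
      (∀ x ∈ T ∩ closedBall u δ, (∑ i, l i * v i) ≤ ∑ i, l i * x i) →
      ∃ (lam : Fin m1 → ℝ) (mu : Fin (m2 + 1) → ℝ),
        (∀ j, 0 ≤ mu j) ∧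
        (∀ j, mu j * peval (extFamily h u δ j) v = 0) ∧
        (∀ i, l i = (∑ k, lam k * pgrad (f k) v i) +
            ∑ j, mu j * pgrad (extFamily h u δ j) v i) ∧
        ∀ x ∈ closedBall u δ,
          (Matrix.of (fun i i' : Fin n =>
            -(∑ k, lam k * phess (f k) x i i') -
              ∑ j, mu j * phess (extFamily h u δ j) x i i')).PosDef

/-- `Z(g) ∩ ∂S` has strictly convex shape with respect to `S`. -/
def StrictlyConvexShape {n : ℕ} (g : MvPolynomial (Fin n) ℝ) (S : Set (Rn n)) : Prop :=
  ∃ Y U : Set (Rn n), IsOpen U ∧ Y = {x | peval g x = 0} ∩ U ∧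
    {x | peval g x = 0} ∩ frontier S ⊆ Y ∧
    (∀ p ∈ closure Y, pgrad g p ≠ 0) ∧
    ∀ p ∈ closure Y,
      (∃ ε : ℝ, (ε = 1 ∨ ε = -1) ∧
        ∀ q ∈ S ∪ closure Y, ε * (∑ i, pgrad g p i * (q i - p i)) ≤ 0) ∧
      ∀ q ∈ S ∪ closure Y, (∑ i, pgrad g p i * (q i - p i)) = 0 → q = p

/-!
By compactness and convexity, `S` is the convex hull of finitely many of its pieces
`S ∩ B(u, δ)`, and the convex hull of finitely many bounded SDP representable sets is again SDP
representable: homogenize each of them to a cone and add the cones. So it suffices to represent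
a small piece of `S` around every point `u` of `S`.

At an active constraint `g` that is not sos-concave, replace `g` by `p = g - (M / 2) g²`, which has
the same sign as `g` near `u`. Since `-∇²p(u) = -∇²g(u) + M ∇g(u) ∇g(u)ᵀ`, positive curvature makes
this matrix positive definite for `M` large. On a sufficiently small ball, the concavity of `p` is
then certified by sums of squares: along every segment of the ball, minus the second directional
derivative of `p` lies in the quadratic module of the ball, in a degree that does not depend on the
segment. Such a certificate gives Jensen's inequality `L p ≤ p (barycenter of L)` for every
functional `L` that is nonnegative on the truncated quadratic module, and hence the moment
relaxation of the piece is exact.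
-/

open scoped Matrix Topology

section Spectrahedra

variable {V W : Type*} [AddCommGroup V] [Module ℝ V] [AddCommGroup W] [Module ℝ W]

/-- A spectrahedron: the solution set of a linear matrix inequality, in a real vector space that
need not be finite-dimensional. -/
def IsSpectrahedron (P : Set V) : Prop :=
  ∃ (ι : Type) (_ : Fintype ι) (A : V →ᵃ[ℝ] Matrix ι ι ℝ),
    (∀ v, (A v).IsSymm) ∧ P = {v | (A v).PosSemidef}

lemma isSymm_linear_of_forall_isSymm {ι : Type*} {A : V →ᵃ[ℝ] Matrix ι ι ℝ}
    (hA : ∀ v, (A v).IsSymm) (v : V) : (A.linear v).IsSymm := by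
  have : A.linear v = A v - A 0 := by simpa using A.linearMap_vsub v 0
  exact this ▸ (hA v).sub (hA 0)

lemma posSemidef_blockDiagonal'_iff {β : Type*} [Finite β] [DecidableEq β] {ι : β → Type*}
    [∀ b, Finite (ι b)] {M : ∀ b, Matrix (ι b) (ι b) ℝ} :
    (Matrix.blockDiagonal' M).PosSemidef ↔ ∀ b, (M b).PosSemidef := by
  have := Fintype.ofFinite β
  have (b : β) := Fintype.ofFinite (ι b)
  have quadForm_eq (x : (Σ b, ι b) → ℝ) : star x ⬝ᵥ Matrix.blockDiagonal' M *ᵥ x =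
      ∑ b, star (fun i => x ⟨b, i⟩) ⬝ᵥ M b *ᵥ fun i => x ⟨b, i⟩ := by
    simp [dotProduct, Matrix.mulVec, Fintype.sum_sigma, Matrix.blockDiagonal'_apply,
      Finset.sum_dite_irrel, dite_mul]
  refine ⟨fun h b => ?_, fun h => .of_dotProduct_mulVec_nonneg
    (Matrix.isHermitian_blockDiagonal'_iff.2 fun b => (h b).isHermitian) fun x => ?_⟩
  · convert h.submatrix (Sigma.mk b) using 1
    ext i j
    simp
  · rw [quadForm_eq]
    exact Finset.sum_nonneg fun b _ => (h b).dotProduct_mulVec_nonneg _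

lemma IsSpectrahedron.preimage {P : Set W} (hP : IsSpectrahedron P) (f : V →ᵃ[ℝ] W) :
    IsSpectrahedron (f ⁻¹' P) := by
  obtain ⟨ι, _, A, hA, rfl⟩ := hP
  exact ⟨ι, inferInstance, A.comp f, fun v => hA (f v), rfl⟩

lemma IsSpectrahedron.convex {P : Set V} (hP : IsSpectrahedron P) : Convex ℝ P := by
  obtain ⟨ι, _, A, -, rfl⟩ := hP
  have convex_posSemidef : Convex ℝ {M : Matrix ι ι ℝ | M.PosSemidef} :=
    fun M hM N hN a b ha hb _ => (hM.smul ha).add (hN.smul hb)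
  exact convex_posSemidef.affine_preimage A

lemma IsSpectrahedron.iInter {β : Type} [Finite β] {P : β → Set V}
    (hP : ∀ b, IsSpectrahedron (P b)) : IsSpectrahedron (⋂ b, P b) := by
  classical
  have := Fintype.ofFinite β
  choose ι _ A hA hP using hP
  let D : (∀ b, Matrix (ι b) (ι b) ℝ) →ₗ[ℝ] Matrix (Σ b, ι b) (Σ b, ι b) ℝ :=
    { toFun := Matrix.blockDiagonal'
      map_add' := Matrix.blockDiagonal'_add
      map_smul' := Matrix.blockDiagonal'_smul }
  refine ⟨Σ b, ι b, inferInstance, D.toAffineMap.comp (AffineMap.pi A), fun v => ?_, ?_⟩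
  · exact (Matrix.blockDiagonal'_transpose _).trans
      (congrArg Matrix.blockDiagonal' (funext fun b => hA b v))
  · ext v
    simp only [Set.mem_iInter, hP]
    exact posSemidef_blockDiagonal'_iff.symm

lemma IsSpectrahedron.inter {P Q : Set V} (hP : IsSpectrahedron P) (hQ : IsSpectrahedron Q) :
    IsSpectrahedron (P ∩ Q) := by
  rw [Set.inter_eq_iInter]
  exact .iInter (Bool.rec hQ hP)

lemma isSpectrahedron_setOf_nonneg (f : V →ᵃ[ℝ] ℝ) : IsSpectrahedron {v | 0 ≤ f v} := by
  refine ⟨Unit, inferInstance, (Matrix.diagonalLinearMap Unit ℝ ℝ).toAffineMap.comp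
    (AffineMap.pi fun _ => f), fun v => Matrix.isSymm_diagonal _, ?_⟩
  ext v
  simp [Matrix.posSemidef_diagonal_iff]

lemma isSpectrahedron_setOf_eq (f : V →ᵃ[ℝ] ℝ) (c : ℝ) : IsSpectrahedron {v | f v = c} := by
  convert (isSpectrahedron_setOf_nonneg (f - AffineMap.const ℝ V c)).inter
    (isSpectrahedron_setOf_nonneg (AffineMap.const ℝ V c - f)) using 1
  ext v
  simp [le_antisymm_iff, and_comm]

end Spectrahedra

section SDPRepresentable

variable {n : ℕ} {V W : Type*} [AddCommGroup V] [Module ℝ V] [AddCommGroup W] [Module ℝ W]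

lemma affineMap_apply_prod (A : Rn n × V →ᵃ[ℝ] W) (x : Rn n) (v : V) :
    A (x, v) = A 0 + ∑ i, x i • A.linear (EuclideanSpace.single i 1, 0) + A.linear (0, v) := by
  have prod_eq : (x, v) = ∑ i, x i • ((EuclideanSpace.single i 1, 0) : Rn n × V) + (0, v) := by
    ext <;> simp [Prod.fst_sum, Prod.snd_sum, Pi.single_apply]
  have linear_apply := congrArg A.linear prod_eq
  simp only [map_add, map_sum, map_smul] at linear_apply
  rw [add_assoc, ← linear_apply, add_comm]
  exact congrFun A.decomp (x, v)

lemma IsSpectrahedron.isSDPRepresentable_image_fst {P : Set (Rn n × V)}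
    (hP : IsSpectrahedron P) : IsSDPRepresentable (Prod.fst '' P) := by
  classical
  obtain ⟨ι, _, A, hA, rfl⟩ := hP
  let e := (Fintype.equivFin ι).symm
  -- The fibre variable enters only through a subspace of `ι × ι` matrices, so finitely many
  -- lifting variables suffice even when `V` is infinite-dimensional.
  let R := LinearMap.range (A.linear ∘ₗ LinearMap.inr ℝ (Rn n) V)
  let B := Module.finBasis ℝ R
  have linear_isSymm := isSymm_linear_of_forall_isSymm hA
  refine ⟨_, _, (A 0).submatrix e e,
    fun i => (A.linear (EuclideanSpace.single i 1, 0)).submatrix e e,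
    fun j => (B j : Matrix ι ι ℝ).submatrix e e, (hA 0).submatrix e,
    fun i => (linear_isSymm _).submatrix e, fun j => ?_, ?_⟩
  · obtain ⟨v, hv⟩ := (B j).2
    exact (hv ▸ linear_isSymm (0, v)).submatrix e
  have posSemidef_iff (x : Rn n) (v : V) (u : Fin (Module.finrank ℝ R) → ℝ)
      (hu : A.linear (0, v) = ∑ j, u j • (B j).1) :
      (A (x, v)).PosSemidef ↔ ((A 0).submatrix e e +
        ∑ i, x i • (A.linear (EuclideanSpace.single i 1, 0)).submatrix e e +
        ∑ j, u j • (B j).1.submatrix e e).PosSemidef := by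
    rw [← Matrix.posSemidef_submatrix_equiv e, affineMap_apply_prod, hu]
    congr! 1
    ext a b
    simp [Matrix.sum_apply]
  ext x
  constructor
  · rintro ⟨⟨x, v⟩, hv, rfl⟩
    refine ⟨B.repr ⟨A.linear (0, v), v, rfl⟩, (posSemidef_iff x v _ ?_).1 hv⟩
    exact (congrArg R.subtype (B.sum_repr ⟨A.linear (0, v), v, rfl⟩).symm).trans (map_sum ..)
  · rintro ⟨u, hu⟩
    obtain ⟨v, hv⟩ := (∑ j, u j • B j).2
    exact ⟨(x, v), (posSemidef_iff x v u (by simpa using hv)).2 hu, rfl⟩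

lemma IsSpectrahedron.isSDPRepresentable_image {P : Set V} (hP : IsSpectrahedron P)
    (f : V →ₗ[ℝ] Rn n) : IsSDPRepresentable (f '' P) := by
  let graph : Set (Rn n × V) := LinearMap.snd ℝ (Rn n) V ⁻¹' P ∩
    ⋂ i, {y | ((EuclideanSpace.proj i : Rn n →L[ℝ] ℝ).toLinearMap ∘ₗ
      (f ∘ₗ LinearMap.snd ℝ _ _ - LinearMap.fst ℝ _ _)).toAffineMap y = 0}
  have : IsSpectrahedron graph :=
    (hP.preimage (LinearMap.snd ℝ (Rn n) V).toAffineMap).inter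
      (.iInter fun i => isSpectrahedron_setOf_eq _ 0)
  convert this.isSDPRepresentable_image_fst using 1
  ext x
  simp [graph, sub_eq_zero, ← PiLp.ext_iff]

lemma IsSDPRepresentable.exists_isSpectrahedron {S : Set (Rn n)} (hS : IsSDPRepresentable S) :
    ∃ (N : ℕ) (P : Set (Rn n × (Fin N → ℝ))), IsSpectrahedron P ∧ Prod.fst '' P = S := by
  obtain ⟨N, d, A₀, A, B, hA₀, hA, hB, rfl⟩ := hS
  let pencil : Rn n × (Fin N → ℝ) →ᵃ[ℝ] Matrix (Fin d) (Fin d) ℝ :=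
    { toFun := fun y => A₀ + ∑ i, y.1 i • A i + ∑ j, y.2 j • B j
      linear :=
        { toFun := fun y => ∑ i, y.1 i • A i + ∑ j, y.2 j • B j
          map_add' := fun y z => by simp [add_smul, Finset.sum_add_distrib]; abel
          map_smul' := fun c y => by simp [mul_smul, Finset.smul_sum] }
      map_vadd' := fun y z => by simp [add_smul, Finset.sum_add_distrib]; abel }
  refine ⟨N, _, ⟨Fin d, inferInstance, pencil, fun y => ?_, rfl⟩, by ext x; simp [pencil]⟩
  simp [pencil, Matrix.IsSymm, Matrix.transpose_add, Matrix.transpose_sum, hA₀.eq,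
    (hA _).eq, (hB _).eq]

end SDPRepresentable

section ConvexHullOfUnion

variable {n : ℕ}

lemma IsSpectrahedron.exists_homogenization {V : Type*} [AddCommGroup V] [Module ℝ V] {P : Set V}
    (hP : IsSpectrahedron P) :
    ∃ Q : Set (ℝ × V), IsSpectrahedron Q ∧ 0 ∈ Q ∧ (∀ v ∈ P, (1, v) ∈ Q) ∧
      (∀ q ∈ Q, 0 ≤ q.1 ∧ (q.1 ≠ 0 → q.1⁻¹ • q.2 ∈ P)) ∧
      ∀ v, (0, v) ∈ Q → ∀ p ∈ P, ∀ s : ℝ, 0 ≤ s → p + s • v ∈ P := by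
  obtain ⟨ι, _, A, hA, rfl⟩ := hP
  have decomp (v : V) : A v = A.linear v + A 0 := congrFun A.decomp v
  let H : ℝ × V →ₗ[ℝ] Matrix ι ι ℝ :=
    (LinearMap.toSpanSingleton ℝ _ (A 0)).coprod A.linear
  have H_apply (t : ℝ) (v : V) : H (t, v) = t • A 0 + A.linear v := by simp [H]
  refine ⟨{q | 0 ≤ q.1} ∩ {q | (H q).PosSemidef},
    (isSpectrahedron_setOf_nonneg (LinearMap.fst ℝ ℝ V).toAffineMap).inter
      ⟨ι, inferInstance, H.toAffineMap, fun q => ?_, rfl⟩,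
    ⟨le_refl (0 : ℝ), by simp [Matrix.PosSemidef.zero]⟩, fun v hv => ⟨zero_le_one' ℝ, ?_⟩,
    fun q hq => ⟨hq.1, fun ht => ?_⟩, fun v hv p hp s hs => ?_⟩
  · exact (H_apply q.1 q.2).symm ▸ ((hA 0).smul q.1).add (isSymm_linear_of_forall_isSymm hA q.2)
  · rwa [mem_ofPred_eq, H_apply, one_smul, add_comm, ← decomp]
  · have : A (q.1⁻¹ • q.2) = q.1⁻¹ • H q := by
      rw [decomp, ← Prod.mk.eta (p := q), H_apply, smul_add, inv_smul_smul₀ ht, map_smul, add_comm]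
    rw [mem_ofPred_eq, this]
    exact hq.2.smul (inv_nonneg.2 hq.1)
  · have : A (p + s • v) = A p + s • H (0, v) := by
      rw [decomp, map_add, map_smul, H_apply, zero_smul, zero_add, decomp p, add_right_comm]
    rw [mem_ofPred_eq, this]
    exact hp.add (hv.2.smul hs)

lemma eq_zero_of_isBounded_of_forall_add_smul_mem {E : Type*} [NormedAddCommGroup E]
    [NormedSpace ℝ E] {W : Set E} (hW : Bornology.IsBounded W) {x z : E}
    (hz : ∀ s : ℝ, 0 ≤ s → x + s • z ∈ W) : z = 0 := by
  obtain ⟨R, hR⟩ := hW.exists_norm_le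
  have smul_le (s : ℝ) (hs : 0 ≤ s) : s * ‖z‖ ≤ R + ‖x‖ := by
    calc s * ‖z‖ = ‖(x + s • z) - x‖ := by simp [norm_smul, abs_of_nonneg hs]
      _ ≤ R + ‖x‖ := (norm_sub_le _ _).trans (by gcongr; exact hR _ (hz s hs))
  by_contra hne
  have hpos := norm_pos_iff.2 hne
  have hR0 : 0 ≤ R + ‖x‖ := by simpa using smul_le 0 le_rfl
  have := smul_le ((R + ‖x‖ + 1) / ‖z‖) (by positivity)
  rw [div_mul_cancel₀ _ hpos.ne'] at this
  linarith

lemma IsSDPRepresentable.exists_cone {W : Set (Rn n)} (hW : IsSDPRepresentable W)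
    (hbdd : Bornology.IsBounded W) (hne : W.Nonempty) :
    ∃ (N : ℕ) (Q : Set (ℝ × (Rn n × (Fin N → ℝ)))), IsSpectrahedron Q ∧ 0 ∈ Q ∧
      (∀ x ∈ W, ∃ z, (1, x, z) ∈ Q) ∧ ∀ q ∈ Q, 0 ≤ q.1 ∧ q.2.1 ∈ q.1 • W := by
  obtain ⟨N, P, hP, rfl⟩ := hW.exists_isSpectrahedron
  obtain ⟨Q, hQ, hQ0, hQ1, hQP, hQrec⟩ := hP.exists_homogenization
  refine ⟨N, Q, hQ, hQ0, ?_, ?_⟩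
  · rintro _ ⟨⟨x, z⟩, hxz, rfl⟩
    exact ⟨z, hQ1 _ hxz⟩
  rintro ⟨t, v⟩ htv
  refine ⟨(hQP _ htv).1, ?_⟩
  obtain rfl | ht := eq_or_ne t 0
  · obtain ⟨p, hp⟩ := hne.of_image
    have : v.1 = 0 := eq_zero_of_isBounded_of_forall_add_smul_mem hbdd
      fun s hs => ⟨p + s • v, hQrec v htv p hp s hs, rfl⟩
    simp [this, Set.zero_smul_set hne]
  · exact ⟨_, ⟨_, (hQP _ htv).2 ht, rfl⟩, by simp [ht]⟩

lemma convexHull_iUnion_eq_image_of_cones {κ E : Type*} {U : κ → Type*} [Fintype κ]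
    [AddCommGroup E] [Module ℝ E] [∀ k, AddCommGroup (U k)] [∀ k, Module ℝ (U k)]
    {W : κ → Set E} {Q : ∀ k, Set (ℝ × E × U k)} (hQ : ∀ k, Convex ℝ (Q k))
    (hQ0 : ∀ k, 0 ∈ Q k) (hQ1 : ∀ k, ∀ x ∈ W k, ∃ z, (1, x, z) ∈ Q k)
    (hQW : ∀ k, ∀ q ∈ Q k, 0 ≤ q.1 ∧ q.2.1 ∈ q.1 • W k) :
    convexHull ℝ (⋃ k, W k) = (fun ω : ∀ k, ℝ × E × U k => ∑ k, (ω k).2.1) ''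
      ({ω | ∑ k, (ω k).1 = 1} ∩ ⋂ k, (fun ω => ω k) ⁻¹' Q k) := by
  classical
  apply Subset.antisymm
  · refine convexHull_min (iUnion_subset fun k x hx => ?_) (Convex.is_linear_image ?_ ?_)
    · obtain ⟨z, hz⟩ := hQ1 k x hx
      refine ⟨Pi.single k (1, x, z), ⟨?_, mem_iInter.2 fun j => ?_⟩, ?_⟩
      · refine (Fintype.sum_eq_single k fun j hj => ?_).trans ?_
        · rw [Pi.single_eq_of_ne hj, Prod.fst_zero]
        · rw [Pi.single_eq_same]
      · obtain rfl | hj := eq_or_ne j k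
        · simpa only [mem_preimage, Pi.single_eq_same] using hz
        · simpa only [mem_preimage, Pi.single_eq_of_ne hj] using hQ0 j
      · refine (Fintype.sum_eq_single k fun j hj => ?_).trans ?_
        · rw [Pi.single_eq_of_ne hj, Prod.snd_zero, Prod.fst_zero]
        · rw [Pi.single_eq_same]
    · refine Convex.inter (fun ω hω ω' hω' a b _ _ hab => ?_)
        (convex_iInter fun k => (hQ k).is_linear_preimage ⟨fun _ _ => rfl, fun _ _ => rfl⟩)
      simp_all [Finset.sum_add_distrib, ← Finset.mul_sum]
    · exact ⟨fun ω ω' => by simp [Finset.sum_add_distrib], fun c ω => by simp [Finset.smul_sum]⟩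
  · rintro _ ⟨ω, ⟨hmass, hω⟩, rfl⟩
    replace hω : ∀ k, ω k ∈ Q k := mem_iInter.1 hω
    choose y hyW hy using fun k => mem_smul_set.1 (hQW k _ (hω k)).2
    simp only [← hy]
    exact (convex_convexHull ℝ _).sum_mem (fun k _ => (hQW k _ (hω k)).1) hmass
      fun k _ => subset_convexHull ℝ _ (mem_iUnion_of_mem k (hyW k))

lemma isSDPRepresentable_convexHull_iUnion {κ : Type} [Finite κ] {W : κ → Set (Rn n)}
    (hW : ∀ k, IsSDPRepresentable (W k)) (hbdd : ∀ k, Bornology.IsBounded (W k))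
    (hne : ∀ k, (W k).Nonempty) : IsSDPRepresentable (convexHull ℝ (⋃ k, W k)) := by
  have := Fintype.ofFinite κ
  choose N Q hQ hQ0 hQ1 hQW using fun k => (hW k).exists_cone (hbdd k) (hne k)
  let coord (k : κ) : (∀ k, ℝ × (Rn n × (Fin (N k) → ℝ))) →ₗ[ℝ] ℝ × (Rn n × (Fin (N k) → ℝ)) :=
    LinearMap.proj k
  have coord_apply (ω k) : coord k ω = ω k := rfl
  convert ((isSpectrahedron_setOf_eq (∑ k, LinearMap.fst ℝ _ _ ∘ₗ coord k).toAffineMap 1).inter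
    (.iInter fun k => (hQ k).preimage (coord k).toAffineMap)).isSDPRepresentable_image
      (∑ k, LinearMap.fst ℝ _ _ ∘ₗ LinearMap.snd ℝ _ _ ∘ₗ coord k) using 1
  rw [convexHull_iUnion_eq_image_of_cones (fun k => (hQ k).convex) hQ0 hQ1 hQW]
  simp [coord_apply, preimage]

lemma isSDPRepresentable_of_forall_closedBall {S : Set (Rn n)} (hS : IsCompact S)
    (hconv : Convex ℝ S)
    (h : ∀ u ∈ S, ∃ δ > 0, IsSDPRepresentable (S ∩ closedBall u δ)) : IsSDPRepresentable S := by
  choose! δ hδ hrep using h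
  obtain ⟨t, htS, hcover⟩ :=
    hS.elim_nhds_subcover (fun u => closedBall u (δ u)) fun u hu => closedBall_mem_nhds u (hδ u hu)
  have hunion : ⋃ u : t, S ∩ closedBall u.1 (δ u) = S := by
    rw [← inter_iUnion, inter_eq_left]
    simpa [iUnion_subtype] using hcover
  rw [← hconv.convexHull_eq, ← hunion]
  exact isSDPRepresentable_convexHull_iUnion (fun u => hrep u (htS u u.2))
    (fun u => hS.isBounded.subset inter_subset_left)
    fun u => ⟨u, htS u u.2, mem_closedBall_self (hδ u (htS u u.2)).le⟩

end ConvexHullOfUnion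

section QuadraticModule

variable {σ κ : Type*}

/-- The truncated quadratic module generated by the weights `w k`: the sums `∑ w k * s k`, with
`s k` a sum of squares of polynomials of degree at most `D`. The weight `1` is not included
automatically. -/
def quadraticModule (w : κ → MvPolynomial σ ℝ) (D : ℕ) : PointedCone ℝ (MvPolynomial σ ℝ) :=
  PointedCone.hull ℝ {f | ∃ k q, q.totalDegree ≤ D ∧ f = w k * q ^ 2}

variable {w : κ → MvPolynomial σ ℝ} {D D' e : ℕ} {f q s : MvPolynomial σ ℝ}

lemma mul_sq_mem_quadraticModule (k : κ) (hq : q.totalDegree ≤ D) :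
    w k * q ^ 2 ∈ quadraticModule w D :=
  PointedCone.subset_hull ⟨k, q, hq, rfl⟩

lemma quadraticModule_le_iff {P : PointedCone ℝ (MvPolynomial σ ℝ)} :
    quadraticModule w D ≤ P ↔ ∀ k q, q.totalDegree ≤ D → w k * q ^ 2 ∈ P := by
  refine Submodule.span_le.trans ⟨fun h k q hq => h ⟨k, q, hq, rfl⟩, ?_⟩
  rintro h _ ⟨k, q, hq, rfl⟩
  exact h k q hq

lemma quadraticModule_mono (h : D ≤ D') : quadraticModule w D ≤ quadraticModule w D' :=
  quadraticModule_le_iff.2 fun k _ hq => mul_sq_mem_quadraticModule k (hq.trans h)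

lemma C_mul_mem_quadraticModule {r : ℝ} (hr : 0 ≤ r) (hf : f ∈ quadraticModule w D) :
    C r * f ∈ quadraticModule w D := by
  rw [C_mul']
  exact PointedCone.smul_mem _ hr hf

lemma sq_mul_mem_quadraticModule (hs : s.totalDegree ≤ e) (hf : f ∈ quadraticModule w D) :
    s ^ 2 * f ∈ quadraticModule w (D + e) := by
  suffices quadraticModule w D ≤
      (quadraticModule w (D + e)).comap (LinearMap.mulLeft ℝ (s ^ 2)) from this hf
  refine quadraticModule_le_iff.2 fun k q hq => ?_
  have mem := mul_sq_mem_quadraticModule (w := w) (D := D + e) (q := q * s) k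
    ((totalDegree_mul _ _).trans (add_le_add hq hs))
  have : s ^ 2 * (w k * q ^ 2) = w k * (q * s) ^ 2 := by ring
  rwa [PointedCone.mem_comap, LinearMap.mulLeft_apply, this]

lemma forall_mem_quadraticModule_nonneg_iff {L : Module.Dual ℝ (MvPolynomial σ ℝ)} :
    (∀ f ∈ quadraticModule w D, 0 ≤ L f) ↔ ∀ k q, q.totalDegree ≤ D → 0 ≤ L (w k * q ^ 2) :=
  quadraticModule_le_iff (P := (PointedCone.positive ℝ ℝ).comap L)

lemma posSemidef_momentMatrix_iff {ι : Type*} [Fintype ι] {A : Type*} [CommRing A] [Algebra ℝ A]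
    (L : Module.Dual ℝ A) (w : A) (b : ι → A) :
    (Matrix.of fun i j => L (w * (b i * b j))).PosSemidef ↔
      ∀ c : ι → ℝ, 0 ≤ L (w * (∑ i, c i • b i) ^ 2) := by
  have isHermitian : (Matrix.of fun i j => L (w * (b i * b j))).IsHermitian := by
    ext i j
    simp [mul_comm (b i)]
  have quadForm_eq (c : ι → ℝ) : star c ⬝ᵥ (Matrix.of fun i j => L (w * (b i * b j))) *ᵥ c =
      L (w * (∑ i, c i • b i) ^ 2) := by
    rw [sq, Finset.sum_mul_sum]
    simp only [Finset.mul_sum, map_sum, dotProduct, Matrix.mulVec, smul_mul_assoc,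
      mul_smul_comm, map_smul, smul_eq_mul, Pi.star_apply, star_trivial, Matrix.of_apply]
    exact Finset.sum_congr rfl fun i _ => Finset.sum_congr rfl fun j _ => by ring
  simp only [Matrix.posSemidef_iff_dotProduct_mulVec, isHermitian, true_and, quadForm_eq]

lemma isSpectrahedron_setOf_forall_mem_quadraticModule_nonneg {κ : Type} [Finite σ] [Finite κ]
    (w : κ → MvPolynomial σ ℝ) (D : ℕ) :
    IsSpectrahedron
      {L : Module.Dual ℝ (MvPolynomial σ ℝ) | ∀ f ∈ quadraticModule w D, 0 ≤ L f} := by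
  let b := Module.finBasis ℝ (restrictTotalDegree σ ℝ D)
  let A (k : κ) : Module.Dual ℝ (MvPolynomial σ ℝ) →ₗ[ℝ] Matrix _ _ ℝ :=
    { toFun := fun L => Matrix.of fun i j => L (w k * ((b i).1 * (b j).1))
      map_add' := fun L L' => rfl
      map_smul' := fun c L => rfl }
  have nonneg_iff (L : Module.Dual ℝ (MvPolynomial σ ℝ)) (k : κ) :
      (A k L).PosSemidef ↔ ∀ q : MvPolynomial σ ℝ, q.totalDegree ≤ D → 0 ≤ L (w k * q ^ 2) := by
    refine (posSemidef_momentMatrix_iff L (w k) _).trans ⟨fun h q hq => ?_, fun h c => h _ ?_⟩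
    · have hsum : ∑ i, b.repr ⟨q, (mem_restrictTotalDegree _ _ _).2 hq⟩ i • (b i).1 = q :=
        (map_sum (restrictTotalDegree σ ℝ D).subtype _ _).symm.trans (congrArg _ (b.sum_repr _))
      exact hsum ▸ h _
    · rw [← mem_restrictTotalDegree]
      exact Submodule.sum_mem _ fun i _ => Submodule.smul_mem _ _ (b i).2
  convert IsSpectrahedron.iInter fun k => ⟨_, inferInstance, (A k).toAffineMap, fun L => ?_, rfl⟩
  · ext L
    simp only [forall_mem_quadraticModule_nonneg_iff, mem_iInter, mem_ofPred_eq,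
      LinearMap.coe_toAffineMap, nonneg_iff]
  · ext i j
    exact congrArg (fun f => L (w k * f)) (mul_comm _ _)

end QuadraticModule

section MomentRelaxation

variable {n : ℕ} {κ : Type*}

/-- The barycenter `(L X₁, …, L Xₙ)` of a functional on polynomials. -/
def barycenter : Module.Dual ℝ (MvPolynomial (Fin n) ℝ) →ₗ[ℝ] Rn n :=
  (WithLp.linearEquiv 2 ℝ (Fin n → ℝ)).symm.toLinearMap ∘ₗ
    LinearMap.pi fun i => Module.Dual.eval ℝ _ (X i)

lemma barycenter_apply (L : Module.Dual ℝ (MvPolynomial (Fin n) ℝ)) (i : Fin n) :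
    barycenter L i = L (X i) := rfl

/-- The moment relaxation of `{x | 0 ≤ w k x, 0 ≤ p j x}`: barycenters of the pseudo-expectations
that are nonnegative on the truncated quadratic module of `w` and on each `p j`. -/
def momentRelaxation {ι : Type*} (w : κ → MvPolynomial (Fin n) ℝ) (D : ℕ)
    (p : ι → MvPolynomial (Fin n) ℝ) : Set (Rn n) :=
  barycenter '' {L | L 1 = 1 ∧ (∀ f ∈ quadraticModule w D, 0 ≤ L f) ∧ ∀ j, 0 ≤ L (p j)}

lemma mem_momentRelaxation_of_nonneg {ι : Type*} {w : κ → MvPolynomial (Fin n) ℝ}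
    {p : ι → MvPolynomial (Fin n) ℝ} {x : Rn n} (hw : ∀ k, 0 ≤ peval (w k) x)
    (hp : ∀ j, 0 ≤ peval (p j) x) (D : ℕ) : x ∈ momentRelaxation w D p := by
  let L : Module.Dual ℝ (MvPolynomial (Fin n) ℝ) := (aeval fun i => x i).toLinearMap
  have L_apply (f) : L f = peval f x := rfl
  have peval_mul_sq (f q) : peval (f * q ^ 2) x = peval f x * peval q x ^ 2 := by simp [peval]
  refine ⟨L, ⟨by simp [L], forall_mem_quadraticModule_nonneg_iff.2 fun k q _ => ?_, hp⟩, ?_⟩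
  · rw [L_apply, peval_mul_sq]
    exact mul_nonneg (hw k) (sq_nonneg _)
  · ext i
    simp [barycenter_apply, L]

lemma isSDPRepresentable_momentRelaxation {κ ι : Type} [Finite κ] [Finite ι]
    (w : κ → MvPolynomial (Fin n) ℝ) (D : ℕ) (p : ι → MvPolynomial (Fin n) ℝ) :
    IsSDPRepresentable (momentRelaxation w D p) := by
  refine IsSpectrahedron.isSDPRepresentable_image ?_ barycenter
  let ev (f : MvPolynomial (Fin n) ℝ) := (Module.Dual.eval ℝ _ f).toAffineMap
  convert (isSpectrahedron_setOf_eq (ev 1) 1).inter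
    ((isSpectrahedron_setOf_forall_mem_quadraticModule_nonneg w D).inter
      (.iInter fun j => isSpectrahedron_setOf_nonneg (ev (p j))))
  ext L
  simp [ev]

end MomentRelaxation

section Jensen

variable {n : ℕ}

lemma totalDegree_aeval_le {σ τ R : Type*} [CommRing R] {f : σ → MvPolynomial τ R}
    (hf : ∀ i, (f i).totalDegree ≤ 1) (q : MvPolynomial σ R) :
    (aeval f q).totalDegree ≤ q.totalDegree := by
  rw [aeval_def, eval₂_eq]
  refine totalDegree_finsetSum_le fun d hd => ?_
  calc (algebraMap R _ (coeff d q) * ∏ i ∈ d.support, f i ^ d i).totalDegree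
    _ ≤ 0 + (∏ i ∈ d.support, f i ^ d i).totalDegree := by
        simpa [algebraMap_eq] using totalDegree_mul (C (coeff d q)) (∏ i ∈ d.support, f i ^ d i)
    _ ≤ ∑ i ∈ d.support, (f i ^ d i).totalDegree := by
        simpa using totalDegree_finsetProd d.support fun i => f i ^ d i
    _ ≤ ∑ i ∈ d.support, d i := Finset.sum_le_sum fun i _ =>
        (totalDegree_pow _ _).trans (mul_le_of_le_one_right' (hf i))
    _ ≤ q.totalDegree := le_totalDegree hd

lemma totalDegree_X_sub_C_le {σ R : Type*} [CommRing R] [Nontrivial R] (i : σ) (r : R) :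
    (X i - C r : MvPolynomial σ R).totalDegree ≤ 1 := by
  simpa using totalDegree_sub (X i) (C r : MvPolynomial σ R)

/-- The substitution `x ↦ v + t (x - v)`. -/
def homothetyHom (v : Rn n) (t : ℝ) : MvPolynomial (Fin n) ℝ →ₐ[ℝ] MvPolynomial (Fin n) ℝ :=
  aeval fun i => C (v i) + C t * (X i - C (v i))

lemma homothetyHom_C (v : Rn n) (t r : ℝ) : homothetyHom v t (C r) = C r :=
  (homothetyHom v t).commutes r

lemma homothetyHom_X (v : Rn n) (t : ℝ) (i : Fin n) :
    homothetyHom v t (X i) = C (v i) + C t * (X i - C (v i)) :=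
  aeval_X _ _

lemma totalDegree_homothetyHom_le (v : Rn n) (t : ℝ) (q : MvPolynomial (Fin n) ℝ) :
    (homothetyHom v t q).totalDegree ≤ q.totalDegree := by
  refine totalDegree_aeval_le (fun i => ?_) q
  refine (totalDegree_add _ _).trans (max_le (by simp) ((totalDegree_mul _ _).trans ?_))
  simpa using totalDegree_X_sub_C_le i (v i)

lemma homothetyHom_one (v : Rn n) : homothetyHom v 1 = AlgHom.id ℝ _ := by
  ext i : 1
  simp [homothetyHom_X]

lemma homothetyHom_zero (v : Rn n) (p : MvPolynomial (Fin n) ℝ) :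
    homothetyHom v 0 p = C (peval p v) := by
  have : homothetyHom v 0 = (Algebra.ofId ℝ _).comp (aeval fun i => v i) := by
    ext i : 1
    simp [homothetyHom_X, Algebra.ofId_apply, algebraMap_eq]
  rw [this]
  rfl

lemma dual_C_mul {σ : Type*} (L : Module.Dual ℝ (MvPolynomial σ ℝ)) (r : ℝ)
    (f : MvPolynomial σ ℝ) : L (C r * f) = r * L f := by
  rw [C_mul', map_smul, smul_eq_mul]

lemma dual_C {σ : Type*} {L : Module.Dual ℝ (MvPolynomial σ ℝ)} (hL : L 1 = 1) (r : ℝ) :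
    L (C r) = r := by
  simpa [hL] using dual_C_mul L r 1

lemma hasDerivAt_dual_homothetyHom (L : Module.Dual ℝ (MvPolynomial (Fin n) ℝ)) (v : Rn n)
    (p : MvPolynomial (Fin n) ℝ) (t : ℝ) :
    HasDerivAt (fun t => L (homothetyHom v t p))
      (L (∑ i, (X i - C (v i)) * homothetyHom v t (pderiv i p))) t := by
  induction p using MvPolynomial.induction_on generalizing L with
  | C a => simpa [homothetyHom_C] using hasDerivAt_const t (L (C a))
  | add p q hp hq => simpa [mul_add, Finset.sum_add_distrib] using (hp L).fun_add (hq L)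
  | mul_X p j hp =>
    let a : MvPolynomial (Fin n) ℝ := X j - C (v j)
    have eq_add (t) : L (homothetyHom v t (p * X j)) =
        v j * L (homothetyHom v t p) + t * (L ∘ₗ LinearMap.mulLeft ℝ a) (homothetyHom v t p) := by
      rw [LinearMap.comp_apply, LinearMap.mulLeft_apply, ← dual_C_mul, ← dual_C_mul, ← map_add,
        map_mul, homothetyHom_X]
      congr 1
      ring
    have leibniz (i) : (X i - C (v i)) * homothetyHom v t (pderiv i (p * X j)) =
        C (v j) * ((X i - C (v i)) * homothetyHom v t (pderiv i p)) +
          C t * (a * ((X i - C (v i)) * homothetyHom v t (pderiv i p))) +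
          (if i = j then a * homothetyHom v t p else 0) := by
      rw [pderiv_mul, map_add, map_mul, map_mul, homothetyHom_X, pderiv_X]
      obtain rfl | hij := eq_or_ne i j
      · simp only [Pi.single_eq_same, map_one, if_true, a]
        ring
      · simp only [Pi.single_eq_of_ne hij.symm, map_zero, if_neg hij, a]
        ring
    simp only [eq_add]
    refine (((hp L).const_mul (v j)).add
      ((hasDerivAt_id t).mul (hp (L ∘ₗ LinearMap.mulLeft ℝ a)))).congr_deriv ?_
    simp only [leibniz, Finset.sum_add_distrib, ← Finset.mul_sum, Finset.sum_ite_eq',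
      Finset.mem_univ, if_true, map_add, dual_C_mul, LinearMap.comp_apply,
      LinearMap.mulLeft_apply, id]
    ring

/-- The polynomial `x ↦ (x - v)ᵀ ∇²p(v + t (x - v)) (x - v)`, that is, the second derivative of
`p` along the segment from `v` to `x` at time `t`. -/
def segHessian (p : MvPolynomial (Fin n) ℝ) (v : Rn n) (t : ℝ) : MvPolynomial (Fin n) ℝ :=
  ∑ i, ∑ j, (X i - C (v i)) * (X j - C (v j)) * homothetyHom v t (pderiv i (pderiv j p))

lemma image_one_le_image_zero_of_deriv2_nonpos {φ φ' φ'' : ℝ → ℝ}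
    (hφ : ∀ t, HasDerivAt φ (φ' t) t) (hφ' : ∀ t, HasDerivAt φ' (φ'' t) t) (h0 : φ' 0 = 0)
    (hφ'' : ∀ t ∈ Icc (0 : ℝ) 1, φ'' t ≤ 0) : φ 1 ≤ φ 0 := by
  have antitone_of_deriv {f f' : ℝ → ℝ} (hf : ∀ t, HasDerivAt f (f' t) t)
      (hf' : ∀ t ∈ Icc (0 : ℝ) 1, f' t ≤ 0) : AntitoneOn f (Icc 0 1) :=
    antitoneOn_of_hasDerivWithinAt_nonpos (convex_Icc 0 1)
      (fun t _ => (hf t).continuousAt.continuousWithinAt) (fun t _ => (hf t).hasDerivWithinAt)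
      fun t ht => hf' t (interior_subset ht)
  refine antitone_of_deriv hφ (fun t ht => ?_) (by simp) (by simp) zero_le_one
  exact h0 ▸ antitone_of_deriv hφ' hφ'' (by simp) ht ht.1

lemma dual_le_peval_barycenter {L : Module.Dual ℝ (MvPolynomial (Fin n) ℝ)} (hL : L 1 = 1)
    {p : MvPolynomial (Fin n) ℝ}
    (hp : ∀ t ∈ Icc (0 : ℝ) 1, L (segHessian p (barycenter L) t) ≤ 0) :
    L p ≤ peval p (barycenter L) := by
  set v := barycenter L with hv
  have deriv2 (t : ℝ) : HasDerivAt
      (fun t => L (∑ i, (X i - C (v i)) * homothetyHom v t (pderiv i p)))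
      (L (segHessian p v t)) t := by
    rw [segHessian, Finset.sum_comm]
    simp only [map_sum]
    refine HasDerivAt.fun_sum fun j _ => ?_
    refine (hasDerivAt_dual_homothetyHom (L ∘ₗ LinearMap.mulLeft ℝ (X j - C (v j))) v
      (pderiv j p) t).congr_deriv ?_
    simp [mul_assoc, mul_left_comm]
  have deriv_zero : L (∑ i, (X i - C (v i)) * homothetyHom v 0 (pderiv i p)) = 0 := by
    simp only [homothetyHom_zero, mul_comm _ (C _), map_sum, dual_C_mul, map_sub, dual_C hL, hv,
      barycenter_apply, sub_self, mul_zero, Finset.sum_const_zero]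
  have := image_one_le_image_zero_of_deriv2_nonpos
    (hasDerivAt_dual_homothetyHom L v p) deriv2 deriv_zero hp
  simpa [homothetyHom_one, homothetyHom_zero, dual_C hL] using this

end Jensen

section Ball

variable {n D : ℕ} {u v : Rn n} {δ t : ℝ} {L : Module.Dual ℝ (MvPolynomial (Fin n) ℝ)}
  {f q : MvPolynomial (Fin n) ℝ}

/-- The truncated quadratic module of the closed ball `‖x - u‖ ≤ δ`. -/
abbrev ballModule (u : Rn n) (δ : ℝ) (D : ℕ) : PointedCone ℝ (MvPolynomial (Fin n) ℝ) :=
  quadraticModule ![1, ballPoly u δ] D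

lemma sq_mem_ballModule (hq : q.totalDegree ≤ D) : q ^ 2 ∈ ballModule u δ D := by
  simpa using mul_sq_mem_quadraticModule (w := ![1, ballPoly u δ]) 0 hq

lemma ballPoly_mem_ballModule : ballPoly u δ ∈ ballModule u δ D := by
  simpa using mul_sq_mem_quadraticModule (w := ![1, ballPoly u δ]) (D := D) (q := 1) 1 (by simp)

lemma C_mem_ballModule {r : ℝ} (hr : 0 ≤ r) : C r ∈ ballModule u δ D := by
  simpa using C_mul_mem_quadraticModule hr (sq_mem_ballModule (u := u) (δ := δ) (D := D) (q := 1)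
    (by simp))

lemma peval_ballPoly (u : Rn n) (δ : ℝ) (x : Rn n) :
    peval (ballPoly u δ) x = δ ^ 2 - dist x u ^ 2 := by
  simp [peval, ballPoly, EuclideanSpace.dist_sq_eq, Real.dist_eq]

lemma peval_ballPoly_nonneg_iff (hδ : 0 ≤ δ) {x : Rn n} :
    0 ≤ peval (ballPoly u δ) x ↔ x ∈ closedBall u δ := by
  rw [peval_ballPoly, sub_nonneg, sq_le_sq₀ dist_nonneg hδ, mem_closedBall]

lemma homothetyHom_ballPoly (u v : Rn n) (δ t : ℝ) :
    homothetyHom v t (ballPoly u δ) = C ((1 - t) * peval (ballPoly u δ) v) +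
      C t * ballPoly u δ + C (t * (1 - t)) * ∑ i, (X i - C (v i)) ^ 2 := by
  have coord (i : Fin n) : homothetyHom v t ((X i - C (u i)) ^ 2) =
      C (1 - t) * C ((v i - u i) ^ 2) + C t * (X i - C (u i)) ^ 2 -
        C (t * (1 - t)) * (X i - C (v i)) ^ 2 := by
    simp only [map_sub, map_pow, homothetyHom_X, homothetyHom_C, map_mul, map_one]
    ring
  simp only [ballPoly, peval, map_sub, map_sum, coord, homothetyHom_C, Finset.sum_add_distrib,
    Finset.sum_sub_distrib, ← Finset.mul_sum, map_mul, map_pow, eval_X, eval_C, map_one]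
  ring

lemma homothetyHom_mem_ballModule (hδ : 0 ≤ δ) (hv : v ∈ closedBall u δ) (ht : t ∈ Icc (0 : ℝ) 1)
    (hf : f ∈ ballModule u δ D) : homothetyHom v t f ∈ ballModule u δ (1 + D) := by
  suffices ballModule u δ D ≤ (ballModule u δ (1 + D)).comap (homothetyHom v t).toLinearMap from
    this hf
  have ht' : 0 ≤ 1 - t := sub_nonneg.2 ht.2
  have ballPoly_mem : homothetyHom v t (ballPoly u δ) ∈ ballModule u δ 1 := by
    rw [homothetyHom_ballPoly]
    refine add_mem (add_mem ?_ ?_) ?_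
    · exact C_mem_ballModule (mul_nonneg ht' ((peval_ballPoly_nonneg_iff hδ).2 hv))
    · exact C_mul_mem_quadraticModule ht.1 ballPoly_mem_ballModule
    · exact C_mul_mem_quadraticModule (mul_nonneg ht.1 ht')
        (sum_mem fun i _ => sq_mem_ballModule (totalDegree_X_sub_C_le i _))
  refine quadraticModule_le_iff.2 fun k q hq => ?_
  have degree_le := (totalDegree_homothetyHom_le v t q).trans hq
  fin_cases k
  · simpa using sq_mem_ballModule (degree_le.trans (Nat.le_add_left D 1))
  · simpa [mul_comm] using sq_mul_mem_quadraticModule degree_le ballPoly_mem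

lemma barycenter_mem_closedBall (hδ : 0 ≤ δ) (hD : 1 ≤ D) (hL1 : L 1 = 1)
    (hL : ∀ f ∈ ballModule u δ D, 0 ≤ L f) : barycenter L ∈ closedBall u δ := by
  rw [← peval_ballPoly_nonneg_iff hδ]
  set v := barycenter L with hv
  have bias_variance (i : Fin n) :
      L ((X i - C (u i)) ^ 2) = L ((X i - C (v i)) ^ 2) + (v i - u i) ^ 2 := by
    have : (X i - C (u i)) ^ 2 = (X i - C (v i)) ^ 2 + C (2 * (v i - u i)) * (X i - C (v i)) +
        C ((v i - u i) ^ 2) := by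
      simp only [map_mul, map_sub, map_pow, map_ofNat]
      ring
    rw [this, map_add, map_add, dual_C_mul, map_sub, dual_C hL1, dual_C hL1, hv, barycenter_apply,
      sub_self, mul_zero, add_zero]
  have variance_nonneg (i : Fin n) : 0 ≤ L ((X i - C (v i)) ^ 2) :=
    hL _ (sq_mem_ballModule ((totalDegree_X_sub_C_le i _).trans hD))
  calc (0 : ℝ) ≤ L (ballPoly u δ) := hL _ ballPoly_mem_ballModule
    _ = δ ^ 2 - ∑ i, (L ((X i - C (v i)) ^ 2) + (v i - u i) ^ 2) := by
        rw [ballPoly, map_sub, dual_C hL1, map_sum, Finset.sum_congr rfl fun i _ => bias_variance i]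
    _ ≤ δ ^ 2 - ∑ i, (v i - u i) ^ 2 :=
        sub_le_sub_left (Finset.sum_le_sum fun i _ => le_add_of_nonneg_left (variance_nonneg i)) _
    _ = peval (ballPoly u δ) v := by simp [peval, ballPoly]

end Ball

section SmallBall

variable {n : ℕ} {u : Rn n} {p q r : MvPolynomial (Fin n) ℝ} {a b ε N : ℝ}

lemma eventually_sq_mul_mem_ballModule {δ : ℝ} {f : MvPolynomial (Fin n) ℝ}
    (s : MvPolynomial (Fin n) ℝ) (hf : ∀ᶠ D in atTop, f ∈ ballModule u δ D) :
    ∀ᶠ D in atTop, s ^ 2 * f ∈ ballModule u δ D := by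
  obtain ⟨D₀, hD₀⟩ := hf.exists
  filter_upwards [eventually_ge_atTop (D₀ + s.totalDegree)] with D hD
  exact quadraticModule_mono hD (sq_mul_mem_quadraticModule le_rfl hD₀)

/-- The inequality `r ^ 2 ≤ ε` has a certificate in the quadratic module of every small enough
ball around `u`. -/
def SqLeNear (u : Rn n) (r : MvPolynomial (Fin n) ℝ) (ε : ℝ) : Prop :=
  ∀ᶠ δ in 𝓝[>] (0 : ℝ), ∀ᶠ D in atTop, C ε - r ^ 2 ∈ ballModule u δ D

lemma sqLeNear_C {c : ℝ} (hc : c ^ 2 ≤ N) : SqLeNear u (C c) N :=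
  .of_forall fun δ => .of_forall fun D => by
    rw [← map_pow, ← map_sub]
    exact C_mem_ballModule (sub_nonneg.2 hc)

lemma SqLeNear.add (hp : SqLeNear u p a) (hq : SqLeNear u q b) :
    SqLeNear u (p + q) (2 * a + 2 * b) := by
  filter_upwards [hp, hq] with δ hp hq
  filter_upwards [hp, hq, eventually_ge_atTop (p - q).totalDegree] with D hp hq hD
  have : C (2 * a + 2 * b) - (p + q) ^ 2 =
      C 2 * (C a - p ^ 2 + (C b - q ^ 2)) + (p - q) ^ 2 := by
    simp only [map_add, map_mul, map_ofNat]
    ring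
  rw [this]
  exact add_mem (C_mul_mem_quadraticModule zero_le_two (add_mem hp hq)) (sq_mem_ballModule hD)

lemma SqLeNear.mul (hp : SqLeNear u p ε) (hq : SqLeNear u q N) (hN : 0 ≤ N) :
    SqLeNear u (p * q) (N * ε) := by
  filter_upwards [hp, hq] with δ hp hq
  filter_upwards [hp, eventually_sq_mul_mem_ballModule p hq] with D hp hpq
  have : C (N * ε) - (p * q) ^ 2 =
      C N * (C ε - p ^ 2) + p ^ 2 * (C N - q ^ 2) := by
    rw [map_mul]
    ring
  rw [this]
  exact add_mem (C_mul_mem_quadraticModule hN hp) hpq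

lemma sqLeNear_X_sub_C (hε : 0 < ε) (j : Fin n) : SqLeNear u (X j - C (u j)) ε := by
  have sq_le : ∀ᶠ δ in 𝓝[>] (0 : ℝ), δ ^ 2 ≤ ε := by
    have : Tendsto (fun δ : ℝ => δ ^ 2) (𝓝[>] 0) (𝓝 0) :=
      ((continuous_pow 2).tendsto' 0 0 (by simp)).mono_left nhdsWithin_le_nhds
    exact this.eventually_le_const hε
  filter_upwards [sq_le] with δ hδ
  filter_upwards [eventually_ge_atTop 1] with D hD
  have : C ε - (X j - C (u j)) ^ 2 = C (ε - δ ^ 2) +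
      ballPoly u δ + ∑ i ∈ Finset.univ.erase j, (X i - C (u i)) ^ 2 := by
    rw [ballPoly, ← Finset.add_sum_erase _ _ (Finset.mem_univ j), map_sub]
    ring
  rw [this]
  exact add_mem (add_mem (C_mem_ballModule (sub_nonneg.2 hδ)) ballPoly_mem_ballModule)
    (sum_mem fun i _ => sq_mem_ballModule ((totalDegree_X_sub_C_le i _).trans hD))

lemma exists_sqLeNear_X (u : Rn n) (j : Fin n) : ∃ N > 0, SqLeNear u (X j) N :=
  ⟨2 * 1 + 2 * u j ^ 2, by positivity, by
    simpa using (sqLeNear_X_sub_C (u := u) one_pos j).add (sqLeNear_C (le_refl (u j ^ 2)))⟩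

theorem sqLeNear_sub_C_peval (u : Rn n) (r : MvPolynomial (Fin n) ℝ) (hε : 0 < ε) :
    SqLeNear u (r - C (peval r u)) ε := by
  induction r using MvPolynomial.induction_on generalizing ε with
  | C c => simpa [peval] using sqLeNear_C (u := u) (c := 0) (by simpa using hε.le)
  | add p q hp hq =>
    have decomp : p + q - C (peval (p + q) u) = (p - C (peval p u)) + (q - C (peval q u)) := by
      simp only [peval, map_add]
      ring
    have := (hp (ε := ε / 4) (by positivity)).add (hq (ε := ε / 4) (by positivity))
    rw [decomp]
    convert this using 1
    ring
  | mul_X p j hp =>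
    have decomp : p * X j - C (peval (p * X j) u) =
        (p - C (peval p u)) * X j + (X j - C (u j)) * C (peval p u) := by
      simp only [peval, map_mul, eval_X]
      ring
    obtain ⟨N, hN, hX⟩ := exists_sqLeNear_X u j
    set K := peval p u ^ 2 + 1
    have hK : 0 < K := by positivity
    have first := (hp (ε := ε / (4 * N)) (by positivity)).mul hX hN.le
    have second := (sqLeNear_X_sub_C (u := u) (ε := ε / (4 * K)) (by positivity) j).mul
      (sqLeNear_C (le_add_of_nonneg_right zero_le_one)) hK.le
    rw [decomp]
    convert first.add second using 1
    field_simp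
    ring

end SmallBall

section PositiveDefinite

variable {ι : Type*}

lemma posDef_of_forall_mem_sphere [Fintype ι] {A : Matrix ι ι ℝ} (hA : A.IsHermitian)
    (h : ∀ v ∈ sphere (0 : ι → ℝ) 1, 0 < v ⬝ᵥ A *ᵥ v) : A.PosDef := by
  refine .of_dotProduct_mulVec_pos hA fun v hv => ?_
  have norm_pos : 0 < ‖v‖ := norm_pos_iff.2 hv
  have := h (‖v‖⁻¹ • v) (by simp [norm_smul, norm_pos.ne'])
  rw [Matrix.mulVec_smul, smul_dotProduct, dotProduct_smul, smul_smul, smul_eq_mul] at this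
  exact pos_of_mul_pos_right this (by positivity)

/-- Finsler's lemma. -/
theorem eventually_posDef_add_smul [Fintype ι] {P Q : Matrix ι ι ℝ} (hP : P.IsHermitian)
    (hQ : Q.PosSemidef) (h : ∀ v ≠ 0, v ⬝ᵥ Q *ᵥ v = 0 → 0 < v ⬝ᵥ P *ᵥ v) :
    ∀ᶠ M : ℝ in atTop, (P + M • Q).PosDef := by
  have quadForm_eq (M : ℝ) (v : ι → ℝ) :
      v ⬝ᵥ (P + M • Q) *ᵥ v = v ⬝ᵥ P *ᵥ v + M * (v ⬝ᵥ Q *ᵥ v) := by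
    rw [Matrix.add_mulVec, dotProduct_add, Matrix.smul_mulVec, dotProduct_smul, smul_eq_mul]
  have hQ' (v : ι → ℝ) : 0 ≤ v ⬝ᵥ Q *ᵥ v := hQ.dotProduct_mulVec_nonneg v
  let U (M : ℝ) : Set (ι → ℝ) := {v | 0 < v ⬝ᵥ (P + M • Q) *ᵥ v}
  have isOpen (M : ℝ) : IsOpen (U M) := isOpen_lt continuous_const (by fun_prop)
  have mono : Monotone U := fun M M' hM v hv => by
    simp only [U, mem_ofPred_eq, quadForm_eq] at hv ⊢
    linarith [mul_le_mul_of_nonneg_right hM (hQ' v)]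
  have cover : sphere (0 : ι → ℝ) 1 ⊆ ⋃ M, U M := fun v hv => by
    simp only [U, mem_iUnion, mem_ofPred_eq, quadForm_eq]
    obtain hv0 | hv0 := (hQ' v).eq_or_lt
    · exact ⟨0, by simpa using h v (ne_of_mem_sphere hv one_ne_zero) hv0.symm⟩
    · exact ((tendsto_atTop_add_const_left _ _
        (tendsto_id.atTop_mul_const hv0)).eventually_gt_atTop 0).exists
  obtain ⟨M₀, hM₀⟩ := (isCompact_sphere (0 : ι → ℝ) 1).elim_directed_cover U isOpen cover
    mono.directed_le
  filter_upwards [eventually_ge_atTop M₀] with M hM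
  exact posDef_of_forall_mem_sphere (hP.add (hQ.isHermitian.smul (star_trivial M)))
    fun v hv => mono hM (hM₀ hv)

lemma exists_pos_posSemidef_sub_smul_one [Finite ι] [DecidableEq ι] {A : Matrix ι ι ℝ}
    (hA : A.PosDef) (c : ℝ) : ∃ η > 0, (A - (c * η) • (1 : Matrix ι ι ℝ)).PosSemidef := by
  have := Fintype.ofFinite ι
  have posDef : ∀ᶠ M : ℝ in atTop, (-(c • (1 : Matrix ι ι ℝ)) + M • A).PosDef := by
    refine eventually_posDef_add_smul ?_ hA.posSemidef fun v hv hv0 => ?_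
    · exact (Matrix.isHermitian_one.smul (star_trivial c)).neg
    · exact absurd hv0 (hA.dotProduct_mulVec_pos hv).ne'
  obtain ⟨M, hM, hM0⟩ := (posDef.and (eventually_gt_atTop 0)).exists
  refine ⟨M⁻¹, inv_pos.2 hM0, ?_⟩
  convert hM.posSemidef.smul (inv_pos.2 hM0).le using 1
  rw [smul_add, inv_smul_smul₀ hM0.ne', smul_neg, smul_smul, mul_comm c, neg_add_eq_sub]

end PositiveDefinite

section LocalConcavity

variable {n D : ℕ} {u v : Rn n} {δ t η : ℝ} {p e : MvPolynomial (Fin n) ℝ}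

/-- Concavity of `p` along the segments issued from any point of a small enough ball around `u`
has a certificate in the quadratic module of the ball, of degree independent of the segment. -/
def SosConcaveNear (p : MvPolynomial (Fin n) ℝ) (u : Rn n) : Prop :=
  ∀ᶠ δ in 𝓝[>] (0 : ℝ), ∀ᶠ D in atTop, ∀ v ∈ closedBall u δ, ∀ t ∈ Icc (0 : ℝ) 1,
    -segHessian p v t ∈ ballModule u δ D

lemma SosConcave.sosConcaveNear (hp : SosConcave p) (u : Rn n) : SosConcaveNear p u := by
  obtain ⟨k, W, hW⟩ := hp
  have degree_W : ∀ᶠ D in atTop, ∀ l i, (W l i).totalDegree ≤ D :=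
    eventually_all.2 fun l => eventually_all.2 fun i => eventually_ge_atTop _
  obtain ⟨D₀, hD₀⟩ := degree_W.exists
  refine .of_forall fun δ => ?_
  filter_upwards [eventually_ge_atTop (1 + D₀)] with D hD v _ t _
  have sum_sq : -segHessian p v t =
      ∑ l, (∑ i, (X i - C (v i)) * homothetyHom v t (W l i)) ^ 2 := by
    simp only [sq, Finset.sum_mul_sum]
    simp only [segHessian, ← Finset.sum_neg_distrib, ← mul_neg, ← map_neg, hW, map_sum, map_mul,
      Finset.mul_sum]
    rw [Finset.sum_comm_cycle]
    exact Fintype.sum_congr _ _ fun l => Fintype.sum_congr _ _ fun i =>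
      Fintype.sum_congr _ _ fun j => mul_mul_mul_comm _ _ _ _
  rw [sum_sq]
  refine sum_mem fun l _ => sq_mem_ballModule (totalDegree_finsetSum_le fun i _ => ?_)
  refine ((totalDegree_mul _ _).trans (add_le_add (totalDegree_X_sub_C_le i _) ?_)).trans hD
  exact (totalDegree_homothetyHom_le v t _).trans (hD₀ l i)

lemma quadForm_mem_ballModule {A : Matrix (Fin n) (Fin n) ℝ} (hA : A.PosSemidef)
    {y : Fin n → MvPolynomial (Fin n) ℝ} (hy : ∀ i, (y i).totalDegree ≤ D) :
    ∑ i, ∑ j, C (A i j) * (y i * y j) ∈ ballModule u δ D := by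
  obtain ⟨k, w, rfl⟩ := Matrix.posSemidef_iff_eq_sum_vecMulVec.1 hA
  have sum_sq : ∑ i, ∑ j, C ((∑ l, Matrix.vecMulVec (w l) (star (w l))) i j) * (y i * y j) =
      ∑ l, (∑ i, C (w l i) * y i) ^ 2 := by
    simp only [Matrix.sum_apply, Matrix.vecMulVec_apply, star_trivial, map_sum, map_mul,
      Finset.sum_mul _ _ (_ * _), sq, Finset.sum_mul_sum]
    rw [Finset.sum_comm_cycle]
    exact Fintype.sum_congr _ _ fun l => Fintype.sum_congr _ _ fun i =>
      Fintype.sum_congr _ _ fun j => mul_mul_mul_comm _ _ _ _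
  rw [sum_sq]
  refine sum_mem fun l _ => sq_mem_ballModule (totalDegree_finsetSum_le fun i _ => ?_)
  exact (totalDegree_mul _ _).trans (by simpa using hy i)

lemma sq_add_sq_sub_mul_mem_ballModule (hη : 0 < η) {a b : MvPolynomial (Fin n) ℝ}
    (ha : a.totalDegree ≤ 1) (hb : b.totalDegree ≤ 1) (he : e.totalDegree ≤ D)
    (hmem : C (η ^ 2) - e ^ 2 ∈ ballModule u δ D) :
    C (η / 2) * (a ^ 2 + b ^ 2) - a * b * e ∈ ballModule u δ (D + 1) := by
  have two_mul_C : (2 : MvPolynomial (Fin n) ℝ) * C (1 / (2 * η)) * C η = 1 := by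
    rw [← map_ofNat C 2, ← map_mul, ← map_mul, ← map_one C]
    congr 1
    field_simp
  have complete_square : C (η / 2) * (a ^ 2 + b ^ 2) - a * b * e =
      C (1 / (2 * η)) * ((C η * a - b * e) ^ 2 + b ^ 2 * (C (η ^ 2) - e ^ 2)) := by
    have : C (η / 2) = C (1 / (2 * η)) * (C η : MvPolynomial (Fin n) ℝ) ^ 2 := by
      rw [← map_pow, ← map_mul]
      congr 1
      field_simp
    rw [this, map_pow]
    linear_combination a * b * e * two_mul_C
  rw [complete_square]
  refine C_mul_mem_quadraticModule (by positivity)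
    (add_mem (sq_mem_ballModule ?_) (sq_mul_mem_quadraticModule hb hmem))
  refine (totalDegree_sub _ _).trans (max_le ((totalDegree_mul _ _).trans ?_)
    ((totalDegree_mul _ _).trans ?_))
  · simpa using ha.trans (Nat.le_add_left 1 D)
  · omega

lemma neg_segHessian_eq (p : MvPolynomial (Fin n) ℝ) (u v : Rn n) (t η : ℝ) :
    -segHessian p v t =
      ∑ i, ∑ j, C ((-phess p u - (n * η) • (1 : Matrix (Fin n) (Fin n) ℝ)) i j) *
        ((X i - C (v i)) * (X j - C (v j))) +
      ∑ i, ∑ j, (C (η / 2) * ((X i - C (v i)) ^ 2 + (X j - C (v j)) ^ 2) -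
        (X i - C (v i)) * (X j - C (v j)) *
          homothetyHom v t (pderiv i (pderiv j p) - C (phess p u i j))) := by
  let y : Fin n → MvPolynomial (Fin n) ℝ := fun i => X i - C (v i)
  have diagonal_eq : ∑ i, ∑ j, C (((n * η) • (1 : Matrix (Fin n) (Fin n) ℝ)) i j) * (y i * y j) =
      ∑ i, ∑ j, C (η / 2) * (y i ^ 2 + y j ^ 2) := by
    have : (C (η / 2) : MvPolynomial (Fin n) ℝ) * 2 = C η := by
      rw [← map_ofNat C 2, ← map_mul, div_mul_cancel₀ _ two_ne_zero]
    simp only [Matrix.smul_apply, Matrix.one_apply, smul_eq_mul, mul_ite, mul_one, mul_zero,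
      apply_ite C, map_zero, ite_mul, zero_mul, Finset.sum_ite_eq, Finset.mem_univ, if_true,
      mul_add, Finset.sum_add_distrib, Finset.sum_const, Finset.card_univ, Fintype.card_fin,
      ← Finset.mul_sum, nsmul_eq_mul, map_mul, map_natCast, ← sq]
    linear_combination -(n * ∑ i, y i ^ 2) * this
  calc -segHessian p v t
    _ = ∑ i, ∑ j, (C ((-phess p u) i j) * (y i * y j) - y i * y j *
          homothetyHom v t (pderiv i (pderiv j p) - C (phess p u i j))) := by
        simp only [segHessian, ← Finset.sum_neg_distrib]
        refine Fintype.sum_congr _ _ fun i => Fintype.sum_congr _ _ fun j => ?_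
        rw [Matrix.neg_apply, map_neg, map_sub, homothetyHom_C]
        ring
    _ = ∑ i, ∑ j, C ((-phess p u - (n * η) • (1 : Matrix (Fin n) (Fin n) ℝ)) i j) * (y i * y j) +
          ∑ i, ∑ j, (C (η / 2) * (y i ^ 2 + y j ^ 2) - y i * y j *
            homothetyHom v t (pderiv i (pderiv j p) - C (phess p u i j))) := by
        simp only [Matrix.sub_apply _ (_ • _), C_sub, sub_mul, Finset.sum_sub_distrib, diagonal_eq]
        ring

theorem sosConcaveNear_of_posDef (hp : (-phess p u).PosDef) : SosConcaveNear p u := by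
  obtain ⟨η, hη, hA⟩ := exists_pos_posSemidef_sub_smul_one hp n
  let E (i j : Fin n) := pderiv i (pderiv j p) - C (phess p u i j)
  have sqLeNear (i j) : SqLeNear u (E i j) (η ^ 2) := sqLeNear_sub_C_peval u _ (by positivity)
  filter_upwards [self_mem_nhdsWithin, eventually_all.2 fun i => eventually_all.2 (sqLeNear i)]
    with δ hδ hE
  have degree_E : ∀ᶠ D in atTop, ∀ i j, (E i j).totalDegree ≤ D :=
    eventually_all.2 fun i => eventually_all.2 fun j => eventually_ge_atTop _
  obtain ⟨D₀, hD₀, hdeg⟩ :=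
    ((eventually_all.2 fun i => eventually_all.2 (hE i)).and degree_E).exists
  filter_upwards [eventually_ge_atTop (1 + D₀ + 1)] with D hD v hv t ht
  have cert (i j : Fin n) : C (η ^ 2) - homothetyHom v t (E i j) ^ 2 ∈ ballModule u δ (1 + D₀) := by
    simpa [homothetyHom_C] using homothetyHom_mem_ballModule hδ.le hv ht (hD₀ i j)
  have degree_cert (i j : Fin n) : (homothetyHom v t (E i j)).totalDegree ≤ 1 + D₀ :=
    ((totalDegree_homothetyHom_le v t _).trans (hdeg i j)).trans (Nat.le_add_left D₀ 1)
  rw [neg_segHessian_eq p u v t η]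
  refine quadraticModule_mono hD (add_mem (quadForm_mem_ballModule hA fun i => ?_)
    (sum_mem fun i _ => sum_mem fun j _ => sq_add_sq_sub_mul_mem_ballModule hη
      (totalDegree_X_sub_C_le i _) (totalDegree_X_sub_C_le j _) (degree_cert i j) (cert i j)))
  exact (totalDegree_X_sub_C_le i _).trans (by omega)

end LocalConcavity

section LocalDescription

variable {n : ℕ} {u : Rn n} {g : MvPolynomial (Fin n) ℝ}

lemma continuous_peval (g : MvPolynomial (Fin n) ℝ) : Continuous (peval g) :=
  (continuous_eval g).comp (PiLp.continuous_ofLp 2 _)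

lemma pderiv_pderiv_comm {σ R : Type*} [CommSemiring R] (i j : σ) (g : MvPolynomial σ R) :
    pderiv i (pderiv j g) = pderiv j (pderiv i g) := by
  induction g using MvPolynomial.induction_on with
  | C a => simp
  | add p q hp hq => simp only [map_add, hp, hq]
  | mul_X p k hp =>
    classical
    have constant (l m : σ) : pderiv l (pderiv m (X k) : MvPolynomial σ R) = 0 := by
      rw [pderiv_X, Pi.single_apply]
      split_ifs <;> simp
    simp only [pderiv_mul, map_add, constant, hp]
    ring

lemma isHermitian_phess (g : MvPolynomial (Fin n) ℝ) (u : Rn n) : (phess g u).IsHermitian := by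
  ext i j
  simp [phess, pderiv_pderiv_comm i j]

lemma neg_phess_sub_C_mul_sq (hg : peval g u = 0) (M : ℝ) :
    -phess (g - C (M / 2) * g ^ 2) u =
      -phess g u + M • Matrix.vecMulVec (pgrad g u) (star (pgrad g u)) := by
  rw [peval] at hg
  ext i j
  simp [phess, pgrad, Matrix.vecMulVec_apply, sq, hg]
  ring

lemma StrictlyQuasiConcaveAt.exists_posDef (hg : StrictlyQuasiConcaveAt g u)
    (hu : peval g u = 0) : ∃ M, (-phess (g - C (M / 2) * g ^ 2) u).PosDef := by
  simp only [neg_phess_sub_C_mul_sq hu]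
  refine (eventually_posDef_add_smul (isHermitian_phess g u).neg
    (Matrix.posSemidef_vecMulVec_self_star _) fun v hv hv0 => ?_).exists
  obtain ⟨-, hcurv⟩ | ⟨-, hpos⟩ := hg
  · rw [Matrix.vecMulVec_mulVec, star_trivial, dotProduct_smul] at hv0
    have orthogonal : pgrad g u ⬝ᵥ v = 0 := by
      simpa [dotProduct_comm v] using hv0
    simpa [dotProduct, Matrix.mulVec, Finset.mul_sum, mul_assoc] using hcurv v hv orthogonal
  · exact hpos.dotProduct_mulVec_pos hv

lemma StrictlyQuasiConcaveAt.exists_sosConcaveNear (hg : StrictlyQuasiConcaveAt g u)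
    (hu : peval g u = 0) :
    ∃ p, SosConcaveNear p u ∧ ∀ᶠ x in 𝓝 u, (0 ≤ peval p x ↔ 0 ≤ peval g x) := by
  obtain ⟨M, hM⟩ := hg.exists_posDef hu
  refine ⟨_, sosConcaveNear_of_posDef hM, ?_⟩
  have factor_pos : ∀ᶠ x in 𝓝 u, 0 < 1 - M / 2 * peval g x :=
    have : Continuous fun x => 1 - M / 2 * peval g x :=
      continuous_const.sub (continuous_const.mul (continuous_peval g))
    this.continuousAt.eventually_const_lt (by simp [hu])
  filter_upwards [factor_pos] with x hx
  have factor : peval (g - C (M / 2) * g ^ 2) x = peval g x * (1 - M / 2 * peval g x) := by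
    simp only [peval, map_sub, map_mul, map_pow, eval_C]
    ring
  rw [factor, mul_nonneg_iff_of_pos_right hx]

lemma exists_sosConcaveNear (hu : 0 ≤ peval g u)
    (h : peval g u = 0 → SosConcave g ∨ StrictlyQuasiConcaveAt g u) :
    ∃ p, SosConcaveNear p u ∧ ∀ᶠ x in 𝓝 u, (0 ≤ peval p x ↔ 0 ≤ peval g x) := by
  obtain active | inactive := hu.eq_or_lt
  · obtain hg | hg := h active.symm
    · exact ⟨g, hg.sosConcaveNear u, .of_forall fun _ => Iff.rfl⟩
    · exact hg.exists_sosConcaveNear active.symm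
  · have sosConcave_zero : SosConcave (0 : MvPolynomial (Fin n) ℝ) := ⟨0, 0, by simp⟩
    refine ⟨0, sosConcave_zero.sosConcaveNear u, ?_⟩
    filter_upwards [(continuous_peval g).continuousAt.eventually_const_lt inactive] with x hx
    simpa [peval] using hx.le

end LocalDescription

section Exactness

variable {n : ℕ} {ι : Type*} {u : Rn n} {p : ι → MvPolynomial (Fin n) ℝ}

lemma momentRelaxation_ballPoly_eq {δ : ℝ} {D : ℕ} (hδ : 0 ≤ δ) (hD : 1 ≤ D)
    (hp : ∀ j, ∀ v ∈ closedBall u δ, ∀ t ∈ Icc (0 : ℝ) 1,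
      -segHessian (p j) v t ∈ ballModule u δ D) :
    momentRelaxation ![1, ballPoly u δ] D p =
      {x ∈ closedBall u δ | ∀ j, 0 ≤ peval (p j) x} := by
  refine Subset.antisymm ?_ fun x ⟨hx, hpx⟩ => mem_momentRelaxation_of_nonneg (fun k => ?_) hpx D
  · rintro _ ⟨L, ⟨hL1, hL, hLp⟩, rfl⟩
    have mem := barycenter_mem_closedBall hδ hD hL1 hL
    refine ⟨mem, fun j => (hLp j).trans (dual_le_peval_barycenter hL1 fun t ht => ?_)⟩
    simpa using hL _ (hp j _ mem t ht)
  · fin_cases k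
    · simp [peval]
    · exact (peval_ballPoly_nonneg_iff hδ).2 hx

lemma eventually_isSDPRepresentable_of_sosConcaveNear {ι : Type} [Finite ι]
    {p : ι → MvPolynomial (Fin n) ℝ} (hp : ∀ j, SosConcaveNear (p j) u) :
    ∀ᶠ δ in 𝓝[>] 0, IsSDPRepresentable {x ∈ closedBall u δ | ∀ j, 0 ≤ peval (p j) x} := by
  filter_upwards [self_mem_nhdsWithin, eventually_all.2 hp] with δ hδ hp
  obtain ⟨D, hp, hD⟩ := ((eventually_all.2 hp).and (eventually_ge_atTop 1)).exists
  rw [← momentRelaxation_ballPoly_eq (le_of_lt hδ) hD hp]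
  exact isSDPRepresentable_momentRelaxation _ D p

end Exactness

theorem isSDPRepresentable_of_strictlyConvexShape_general {n : ℕ} {ι : Type} [Finite ι]
    (g : ι → MvPolynomial (Fin n) ℝ) (S : Set (Rn n))
    (hS : S = {x : Rn n | ∀ i, 0 ≤ peval (g i) x}) (hcpt : IsCompact S) (hconv : Convex ℝ S)
    (h : ∀ u ∈ S, ∀ i, peval (g i) u = 0 → SosConcave (g i) ∨ StrictlyQuasiConcaveAt (g i) u) :
    IsSDPRepresentable S := by
  refine isSDPRepresentable_of_forall_closedBall hcpt hconv fun u hu => ?_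
  have nonneg : ∀ i, 0 ≤ peval (g i) u := by rwa [hS] at hu
  choose p hp hpg using fun i => exists_sosConcaveNear (nonneg i) (h u hu i)
  have ball_subset : ∀ᶠ δ in 𝓝[>] (0 : ℝ),
      closedBall u δ ⊆ {x | ∀ i, 0 ≤ peval (p i) x ↔ 0 ≤ peval (g i) x} :=
    nhdsWithin_le_nhds (eventually_closedBall_subset (eventually_all.2 hpg))
  obtain ⟨δ, ⟨hrep, hball⟩, hδ⟩ := ((eventually_isSDPRepresentable_of_sosConcaveNear hp).and
    ball_subset |>.and self_mem_nhdsWithin).exists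
  refine ⟨δ, hδ, ?_⟩
  convert hrep using 1
  rw [hS, inter_comm]
  ext x
  exact and_congr_right fun hx => forall_congr' fun i => (hball hx i).symm

/-- geometric sufficient condition (Theorem 5.1 of the paper):
under nonsingularity and strictly convex shape hypotheses, if each active defining
polynomial is sos-concave or its zero set is positively curved on `∂S`,
then `S` is SDP representable. -/
theorem isSDPRepresentable_of_strictlyConvexShape {n m : ℕ}
    (g : Fin m → MvPolynomial (Fin n) ℝ) (S : Set (Rn n))
    (hS : S = {x : Rn n | ∀ i, 0 ≤ peval (g i) x})
    (hcpt : IsCompact S) (hconv : Convex ℝ S) (hint : (interior S).Nonempty)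
    (hpos : ∀ x ∈ interior S, ∀ i, 0 < peval (g i) x)
    (hnsing : ∀ i : Fin m, ∀ u ∈ {x : Rn n | peval (g i) x = 0} ∩ S, pgrad (g i) u ≠ 0)
    (hshape : ∀ i : Fin m, ¬ SosConcave (g i) → StrictlyConvexShape (g i) S)
    (h : ∀ u ∈ frontier S, ∀ i, peval (g i) u = 0 →
      SosConcave (g i) ∨ ∀ v : Fin n → ℝ, v ≠ 0 → (∑ j, pgrad (g i) u j * v j) = 0 →
        0 < -(∑ j, ∑ j', v j * phess (g i) u j j' * v j')) :
    IsSDPRepresentable S :=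
  isSDPRepresentable_of_strictlyConvexShape_general g S hS hcpt hconv fun u hu i hi =>
    (h u ⟨subset_closure hu, fun hint' => (hpos u hint' i).ne' hi⟩ i hi).imp_right fun hcurv =>
      .inl ⟨hnsing i u ⟨hi, hu⟩, hcurv⟩
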